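/- For every a = (a₃,a₂,a₁,a₀) ∈ ℕ⁴ the dual canonical basis elements satisfy B[a₃, a₂+1, a₁, a₀+1] = q^{a₂+2a₁+3a₀} B[a] p₀ = q^{4a₃+3a₂+2a₁+a₀} p₀ B[a] and B[a₃+1, a₂, a₁+1, a₀] = q^{3a₃+2a₂+a₁} p₁ B[a] = q^{a₃+2a₂+3a₁+4a₀} B[a] p₁. -/

import Mathlib

noncomputable section

abbrev F : Type := RatFunc ℚ

/-- The deformation parameter `q`. -/
def qq : F := RatFunc.X

/-- The quantum integer `[3] = q² + 1 + q⁻²`. -/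
def box3 : F := qq ^ 2 + 1 + (qq⁻¹) ^ 2

/-- The generators `E₁, E₂` of the free algebra. -/
def gen (i : Fin 2) : FreeAlgebra F (Fin 2) := FreeAlgebra.ι F i

/-- The quantized Serre relations. -/
inductive SerreRel : FreeAlgebra F (Fin 2) → FreeAlgebra F (Fin 2) → Prop
  | rel1 : SerreRel
      (gen 0 ^ 3 * gen 1 - box3 • (gen 0 ^ 2 * gen 1 * gen 0)
        + box3 • (gen 0 * gen 1 * gen 0 ^ 2) - gen 1 * gen 0 ^ 3) 0
  | rel2 : SerreRel
      (gen 1 ^ 3 * gen 0 - box3 • (gen 1 ^ 2 * gen 0 * gen 1)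
        + box3 • (gen 1 * gen 0 * gen 1 ^ 2) - gen 0 * gen 1 ^ 3) 0

/-- `U = U_q(𝔫)`, the free algebra on `E₁, E₂` modulo the quantized Serre relations. -/
abbrev U : Type := RingQuot SerreRel

def E1 : U := RingQuot.mkAlgHom F SerreRel (gen 0)
def E2 : U := RingQuot.mkAlgHom F SerreRel (gen 1)

/-- `A = (1/(q+q⁻¹))(E₂E₁ − q⁻²E₁E₂)`. -/
def Aelt : U := (qq + qq⁻¹)⁻¹ • (E2 * E1 - (qq⁻¹) ^ 2 • (E1 * E2))

def v0 : U := E1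
def v1 : U := Aelt * v0 - v0 * Aelt
def v2 : U := Aelt * v1 - v1 * Aelt
def v3 : U := Aelt * v2 - v2 * Aelt

/-- `uᵢ = (1 − q⁻²)⁻²ⁱ vᵢ`. -/
def u0 : U := v0
def u1 : U := ((1 - (qq⁻¹) ^ 2)⁻¹) ^ 2 • v1
def u2 : U := ((1 - (qq⁻¹) ^ 2)⁻¹) ^ 4 • v2
def u3 : U := ((1 - (qq⁻¹) ^ 2)⁻¹) ^ 6 • v3

/-- `p₁ = u₃u₁ − q²u₂²`. -/
def p1 : U := u3 * u1 - qq ^ 2 • u2 ^ 2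
/-- `p₀ = u₂u₀ − q²u₁²`. -/
def p0 : U := u2 * u0 - qq ^ 2 • u1 ^ 2

/-- `S`, the subalgebra of `U` generated by `u₀, u₁, u₂, u₃`. -/
abbrev Sgen : Subalgebra F U := Algebra.adjoin F ({u0, u1, u2, u3} : Set U)

def us0 : Sgen := ⟨u0, Algebra.subset_adjoin (by simp)⟩
def us1 : Sgen := ⟨u1, Algebra.subset_adjoin (by simp)⟩
def us2 : Sgen := ⟨u2, Algebra.subset_adjoin (by simp)⟩
def us3 : Sgen := ⟨u3, Algebra.subset_adjoin (by simp)⟩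

/-- `p₁ = u₃u₁ − q²u₂²` as an element of `S`. -/
def ps1 : Sgen := us3 * us1 - qq ^ 2 • us2 ^ 2
/-- `p₀ = u₂u₀ − q²u₁²` as an element of `S`. -/
def ps0 : Sgen := us2 * us0 - qq ^ 2 • us1 ^ 2

/-- Index quadruples `a = (a₃, a₂, a₁, a₀)`. -/
abbrev Idx : Type := ℕ × ℕ × ℕ × ℕ

/-- The PBW monomial `u₃^{a₃}u₂^{a₂}u₁^{a₁}u₀^{a₀}`. -/
def mon (a : Idx) : Sgen := us3 ^ a.1 * us2 ^ a.2.1 * us1 ^ a.2.2.1 * us0 ^ a.2.2.2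

/-- `b(a) = C(a₃,2)+C(a₂,2)+C(a₁,2)+C(a₀,2)`. -/
def bexp (a : Idx) : ℕ :=
  Nat.choose a.1 2 + Nat.choose a.2.1 2 + Nat.choose a.2.2.1 2 + Nat.choose a.2.2.2 2

/-- The dual PBW basis element `E[a] = q^{b(a)} u₃^{a₃}u₂^{a₂}u₁^{a₁}u₀^{a₀}`. -/
def Ee (a : Idx) : Sgen := qq ^ bexp a • mon a

/-- `N(a) = (a₃+a₂+a₁+a₀)² − 7a₃ − 5a₂ − 3a₁ − a₀`. -/
def Nnum (a : Idx) : ℤ :=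
  ((a.1 : ℤ) + a.2.1 + a.2.2.1 + a.2.2.2) ^ 2
    - 7 * a.1 - 5 * a.2.1 - 3 * a.2.2.1 - a.2.2.2

/-- `a ⊴ b` iff `b − a ∈ ℕ·(−1,2,−1,0) + ℕ·(0,−1,2,−1)`. -/
def tri (a b : Idx) : Prop :=
  ∃ s r : ℕ,
    (b.1 : ℤ) = a.1 - s ∧
    (b.2.1 : ℤ) = a.2.1 + 2 * s - r ∧
    (b.2.2.1 : ℤ) = a.2.2.1 - s + 2 * r ∧
    (b.2.2.2 : ℤ) = a.2.2.2 - r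

/-- `S(a) = {b ∈ ℕ⁴ : a ⊴ b and a ≠ b}`. -/
def Sset (a : Idx) : Set Idx := {b | tri a b ∧ a ≠ b}

/-- Condition (i): `B[a] − E[a] ∈ Σ_{b ∈ S(a)} qℤ[q]·E[b]`. -/
def cond1 (B : Idx → Sgen) (a : Idx) : Prop :=
  ∃ φ : Idx →₀ Polynomial ℤ,
    (↑φ.support : Set Idx) ⊆ Sset a ∧
    B a - Ee a =
      φ.sum fun b p => (qq * Polynomial.eval₂ (Int.castRingHom F) qq p) • Ee b

/-- Hypotheses on the bar involution of coefficients `bar : q ↦ q⁻¹` and on the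
anti-automorphism `σ` of `S`: `σ` is an additive, anti-multiplicative bijection with
`σ(c(q)·x) = c(q⁻¹)·σ(x)` and `σ(uᵢ) = q^{2i}uᵢ`. -/
def SigmaHyp (bar : F →+* F) (σ : Sgen → Sgen) : Prop :=
  bar qq = qq⁻¹ ∧
  Function.Bijective σ ∧
  (∀ x y : Sgen, σ (x + y) = σ x + σ y) ∧
  (∀ x y : Sgen, σ (x * y) = σ y * σ x) ∧
  (∀ (c : F) (x : Sgen), σ (c • x) = bar c • σ x) ∧
  σ us0 = us0 ∧ σ us1 = qq ^ 2 • us1 ∧ σ us2 = qq ^ 4 • us2 ∧ σ us3 = qq ^ 6 • us3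

/-- The defining properties of the dual canonical basis `B`: for every `a ∈ ℕ⁴`,
`B[a] − E[a] ∈ Σ_{b ∈ S(a)} qℤ[q]·E[b]` and `σ(B[a]) = q^{−N(a)}B[a]`. -/
def DCB (bar : F →+* F) (σ : Sgen → Sgen) (B : Idx → Sgen) : Prop :=
  ∀ a : Idx, cond1 B a ∧ σ (B a) = qq ^ (-Nnum a) • B a

/-- Extension of `B` to integer quadruples by the convention that `B[a] = 0` whenever
some coordinate of `a` is negative. -/
def Bz (B : Idx → Sgen) (a : ℤ × ℤ × ℤ × ℤ) : Sgen :=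
  if 0 ≤ a.1 ∧ 0 ≤ a.2.1 ∧ 0 ≤ a.2.2.1 ∧ 0 ≤ a.2.2.2 then
    B (a.1.toNat, a.2.1.toNat, a.2.2.1.toNat, a.2.2.2.toNat)
  else 0

/-!
By Lusztig's argument, `B[a]` is the only element that is congruent to `E[a]` modulo
`Σ_{b ∈ S(a)} qℤ[q]·E[b]` and scaled by `q^{-N(a)}` under `σ`: a difference of two such elements is
a `qℤ[q]`-combination of the `B[b]` with bar-invariant coefficients, and `qℤ[q]` contains no nonzero
bar-invariant element. It therefore suffices to verify both properties for `q^k B[a] p₀` and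
`q^k p₁ B[a]`. They follow from the facts that `p₀` and `p₁` `q`-commute with every `uᵢ`, and that
multiplying `E[b]` by `p₀` gives, up to a power of `q`,
`E[b + (0,1,0,1)] - q^{b₂+b₀+1} E[b + (0,0,2,0)]`. The case of `p₁` is the mirror image of that of
`p₀` under the anti-automorphism `uᵢ ↦ u_{3-i}` of the straightening relations.

The Serre relations give the straightening relations as follows. They imply that `A` and a suitable
`W` of degree `2δ` commute, that `⁅W, u₀⁆` is a multiple of `⁅A, ⁅A, u₀⁆⁆`, and that `u₀` and `u₁`
`q`-commute; applying the commuting derivations `⁅A, ·⁆` and `⁅W, ·⁆` to the last relation yields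
all the others.
-/

section TriangularChange

variable {K M ι α : Type*} [Field K] [AddCommGroup M] [Module K M] [LinearOrder α]

theorem linearIndependent_of_sub_mem_span_lt {v w : ι → M} {height : ι → α}
    (hv : LinearIndependent K v)
    (hw : ∀ i, w i - v i ∈ Submodule.span K (v '' {j | height j < height i})) :
    LinearIndependent K w := by
  classical
  refine linearIndependent_iff.2 fun φ hφ => by_contra fun hne => ?_
  obtain ⟨i, hi, hmax⟩ := φ.support.exists_max_image height (Finsupp.support_nonempty_iff.2 hne)
  set V := Submodule.span K (v '' {i}ᶜ)
  have hsub : ∀ j ∈ φ.support, w j - v j ∈ V := fun j hj =>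
    Submodule.span_mono (Set.image_mono fun l hl hli => by
      cases hli
      exact (hmax j hj).not_gt hl) (hw j)
  have hrest : ∑ j ∈ φ.support.erase i, φ j • w j ∈ V := by
    refine sum_mem fun j hj => V.smul_mem _ ?_
    obtain ⟨hji, hj⟩ := Finset.mem_erase.1 hj
    have hvj : v j ∈ V := Submodule.subset_span ⟨j, hji, rfl⟩
    simpa only [sub_add_cancel] using V.add_mem (hsub j hj) hvj
  rw [Finsupp.linearCombination_apply, Finsupp.sum, ← Finset.add_sum_erase _ _ hi] at hφ
  have hwi : w i ∈ V := by
    refine (V.smul_mem_iff (Finsupp.mem_support_iff.1 hi)).1 ?_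
    rw [eq_neg_of_add_eq_zero_left hφ]
    exact V.neg_mem hrest
  have hvi : v i ∈ V := by simpa only [sub_sub_cancel] using V.sub_mem hwi (hsub i hi)
  exact hv.notMem_span_image (by simp) hvi

end TriangularChange

section Lusztig

variable {K M ι : Type*} [Field K] [AddCommGroup M] [Module K M]

/-- The lattice `Σ_{i ∈ T} qℤ[q]·v i` spanned by the `q • v i`, as a module over `ℤ[q]`. -/
def qLattice (q : K) (v : ι → M) (T : Set ι) : Submodule (Algebra.adjoin ℤ {q}) M :=
  Submodule.span _ ((fun i => q • v i) '' T)

variable {q : K} {v w : ι → M} {S : ι → Set ι} {height : ι → ℕ}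

theorem smul_mem_qLattice (v : ι → M) {T : Set ι} {i : ι} (hi : i ∈ T) :
    q • v i ∈ qLattice q v T :=
  Submodule.subset_span ⟨i, hi, rfl⟩

theorem qLattice_mono (v : ι → M) {T T' : Set ι} (h : T ⊆ T') : qLattice q v T ≤ qLattice q v T' :=
  Submodule.span_mono (Set.image_mono h)

theorem q_smul_mem_of_mem (L : Submodule (Algebra.adjoin ℤ {q}) M) {z : M} (hz : z ∈ L) :
    q • z ∈ L :=
  L.smul_mem ⟨q, Algebra.self_mem_adjoin_singleton ℤ q⟩ hz

theorem smul_eval₂_sum_mem_qLattice (q : K) (v : ι → M) {T : Set ι} {φ : ι →₀ Polynomial ℤ}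
    (hφ : ↑φ.support ⊆ T) :
    (φ.sum fun i p => (q * p.eval₂ (Int.castRingHom K) q) • v i) ∈ qLattice q v T := by
  refine sum_mem fun i hi => ?_
  have hp : (φ i).eval₂ (Int.castRingHom K) q ∈ Algebra.adjoin ℤ {q} :=
    Polynomial.aeval_mem_adjoin_singleton ℤ q (p := φ i)
  change (q * (φ i).eval₂ (Int.castRingHom K) q) • v i ∈ _
  rw [mul_comm, mul_smul]
  exact (qLattice q v T).smul_mem ⟨_, hp⟩ (smul_mem_qLattice v (hφ hi))

theorem qLattice_le_qLattice_of_sub_mem (hS : ∀ i, ∀ j ∈ S i, S j ⊆ S i)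
    (hheight : ∀ i, ∀ j ∈ S i, height j < height i)
    (hw : ∀ i, w i - v i ∈ qLattice q v (S i)) (i : ι) :
    qLattice q v (S i) ≤ qLattice q w (S i) := by
  induction hn : height i using Nat.strong_induction_on generalizing i with
  | _ n ih =>
    refine Submodule.span_le.2 ?_
    rintro _ ⟨j, hj, rfl⟩
    have hsub : w j - v j ∈ qLattice q w (S i) :=
      qLattice_mono w (hS i j hj) (ih _ (hn ▸ hheight i j hj) j rfl (hw j))
    have hdiff := sub_mem (smul_mem_qLattice (q := q) w hj) (q_smul_mem_of_mem _ hsub)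
    rwa [← smul_sub, sub_sub_cancel] at hdiff

theorem mem_span_of_mem_qLattice {T : Set ι} {z : M} (hz : z ∈ qLattice q v T) :
    z ∈ Submodule.span K (v '' T) := by
  have hgen : (fun i => q • v i) '' T ⊆ Submodule.span K (v '' T) := by
    rintro _ ⟨i, hi, rfl⟩
    exact Submodule.smul_mem _ _ (Submodule.subset_span ⟨i, hi, rfl⟩)
  exact Submodule.span_le.2 hgen (Submodule.span_subset_span _ K _ hz)

theorem linearIndependent_of_sub_mem_qLattice (hheight : ∀ i, ∀ j ∈ S i, height j < height i)
    (hv : LinearIndependent K v) (hw : ∀ i, w i - v i ∈ qLattice q v (S i)) :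
    LinearIndependent K w := by
  refine linearIndependent_of_sub_mem_span_lt (height := height) hv fun i => ?_
  exact Submodule.span_mono (Set.image_mono (hheight i)) (mem_span_of_mem_qLattice (hw i))

theorem ne_zero_of_transcendental (hq : Transcendental ℤ q) : q ≠ 0 := by
  rintro rfl
  exact hq isAlgebraic_zero

open Polynomial in
/-- `q·p(q)` has only positive powers of `q`, while its image under `bar` has only negative ones. -/
theorem eq_zero_of_bar_fixed (hq : Transcendental ℤ q) {bar : K →+* K} (hbar : bar q = q⁻¹)
    {x : K} (hx : x ∈ Algebra.adjoin ℤ {q}) (hfix : bar (q * x) = q * x) : x = 0 := by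
  obtain ⟨p, rfl⟩ : ∃ p : ℤ[X], aeval q p = x := by
    rwa [Algebra.adjoin_singleton_eq_range_aeval] at hx
  have hq0 : q ≠ 0 := ne_zero_of_transcendental hq
  have hbarp : q ^ p.natDegree * bar (aeval q p) = aeval q p.reverse := by
    let _ := invertibleOfNonzero (inv_ne_zero hq0)
    have hrev := eval₂_reverse_mul_pow (algebraMap ℤ K) q⁻¹ p
    rw [invOf_eq_inv, inv_inv, ← hbar] at hrev
    rw [aeval_def, hom_eval₂, RingHom.ext_int (bar.comp (algebraMap ℤ K)) (algebraMap ℤ K), ← hrev,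
      hbar, inv_pow, mul_comm, inv_mul_cancel_right₀ (pow_ne_zero _ hq0), aeval_def]
  have hrev : p.reverse = X ^ (p.natDegree + 2) * p := by
    refine transcendental_iff_injective.1 hq ?_
    rw [map_mul, hbar, inv_mul_eq_iff_eq_mul₀ hq0] at hfix
    rw [← hbarp, hfix, map_mul, map_pow, aeval_X]
    ring
  by_contra hp
  have hp : p ≠ 0 := fun h => hp (by simp [h])
  have := p.reverse_natDegree_le
  rw [hrev, natDegree_mul (pow_ne_zero _ X_ne_zero) hp, natDegree_X_pow] at this
  omega

theorem semilinear_linearCombination_of_eigen {bar : K →+* K} {σ : M →ₛₗ[bar] M} {c : K}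
    {ψ : ι →₀ K} (hσ : ∀ i ∈ ψ.support, σ (w i) = c • w i) :
    σ (Finsupp.linearCombination K w ψ) =
      c • Finsupp.linearCombination K w (ψ.mapRange bar (map_zero bar)) := by
  rw [Finsupp.linearCombination_apply, Finsupp.linearCombination_apply,
    Finsupp.sum_mapRange_index (by simp), Finsupp.smul_sum, Finsupp.sum, map_sum]
  exact Finset.sum_congr rfl fun i hi => by rw [map_smulₛₗ, hσ i hi, smul_comm]

theorem eq_zero_of_mem_qLattice_of_bar_eq (hq : Transcendental ℤ q) {bar : K →+* K}
    (hbar : bar q = q⁻¹) {σ : M →ₛₗ[bar] M} {T : Set ι} {c : K} (hc : c ≠ 0)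
    (hw : LinearIndependent K w) (hσ : ∀ i ∈ T, σ (w i) = c • w i) {z : M}
    (hz : z ∈ qLattice q w T) (hσz : σ z = c • z) : z = 0 := by
  obtain ⟨φ, hφT, rfl⟩ := (Finsupp.mem_span_image_iff_linearCombination _).1 hz
  set ψ : ι →₀ K := φ.mapRange (fun x : Algebra.adjoin ℤ {q} => q * x) (by simp)
  have hφψ : Finsupp.linearCombination _ (fun i => q • w i) φ =
      Finsupp.linearCombination K w ψ := by
    rw [Finsupp.linearCombination_apply, Finsupp.linearCombination_apply,
      Finsupp.sum_mapRange_index (by simp)]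
    exact Finset.sum_congr rfl fun i _ =>
      (smul_smul (φ i : K) q (w i)).trans (by rw [mul_comm])
  have hψT : ∀ i ∈ ψ.support, i ∈ T := fun i hi => hφT (Finsupp.support_mapRange hi)
  rw [hφψ, semilinear_linearCombination_of_eigen fun i hi => hσ i (hψT i hi)] at hσz
  have hψ : ψ.mapRange bar (map_zero bar) = ψ := hw (smul_right_injective M hc hσz)
  have hφ : φ = 0 := Finsupp.ext fun i =>
    Subtype.ext (eq_zero_of_bar_fixed hq hbar (φ i).2 (DFunLike.congr_fun hψ i))
  rw [hφ, map_zero]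

theorem eq_of_sub_mem_qLattice_of_bar_eq (hq : Transcendental ℤ q) {bar : K →+* K}
    (hbar : bar q = q⁻¹) {σ : M →ₛₗ[bar] M} {c : ι → K}
    (hS : ∀ i, ∀ j ∈ S i, S j ⊆ S i) (hheight : ∀ i, ∀ j ∈ S i, height j < height i)
    (hc : ∀ i, ∀ j ∈ S i, c j = c i) (hv : LinearIndependent K v)
    (hw : ∀ i, w i - v i ∈ qLattice q v (S i)) (hσ : ∀ i, σ (w i) = c i • w i)
    {i : ι} (hc0 : c i ≠ 0) {z : M} (hz : z - v i ∈ qLattice q v (S i))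
    (hσz : σ z = c i • z) : w i = z := by
  have hwli := linearIndependent_of_sub_mem_qLattice hheight hv hw
  have hsub : w i - z ∈ qLattice q w (S i) := by
    have hdiff := (qLattice q v (S i)).sub_mem (hw i) hz
    rw [sub_sub_sub_cancel_right (w i) z (v i)] at hdiff
    exact qLattice_le_qLattice_of_sub_mem hS hheight hw i hdiff
  refine sub_eq_zero.1 (eq_zero_of_mem_qLattice_of_bar_eq hq hbar hc0 hwli
    (fun j hj => by rw [hσ, hc i j hj]) hsub ?_)
  rw [map_sub, hσ, hσz, smul_sub]

end Lusztig

section SerreToKronecker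

variable {K R : Type*} [Field K] [Ring R] [Algebra K R]

theorem lie_mul_eq_add (a x y : R) : ⁅a, x * y⁆ = ⁅a, x⁆ * y + x * ⁅a, y⁆ := by
  simp only [Ring.lie_def]
  noncomm_ring

section Ladder

attribute [local instance] LieRing.ofAssociativeRing

variable {t k : K} {A W x : R}

theorem lie_lie_of_lie_eq_smul (hAW : ⁅W, A⁆ = 0) {y : R} (hW : ⁅W, x⁆ = k • y) :
    ⁅W, ⁅A, x⁆⁆ = k • ⁅A, y⁆ := by
  rw [leibniz_lie, hAW, hW, zero_lie, zero_add, LieAlgebra.lie_smul]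

theorem lie_lie_mul_self (hx : ⁅A, x⁆ * x = t • (x * ⁅A, x⁆)) :
    ⁅A, ⁅A, x⁆⁆ * x = t • (x * ⁅A, ⁅A, x⁆⁆) + (t - 1) • (⁅A, x⁆ * ⁅A, x⁆) := by
  have hA := congrArg (⁅A, ·⁆) hx
  simp only [LieAlgebra.lie_smul, lie_mul_eq_add] at hA
  linear_combination (norm := module) hA

theorem lie_lie_lie_mul_self_add (hk : k ≠ 0) (hAW : ⁅W, A⁆ = 0) (hW : ⁅W, x⁆ = k • ⁅A, ⁅A, x⁆⁆)
    (hx : ⁅A, x⁆ * x = t • (x * ⁅A, x⁆)) :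
    ⁅A, ⁅A, ⁅A, x⁆⁆⁆ * x + ⁅A, x⁆ * ⁅A, ⁅A, x⁆⁆ =
      t • (⁅A, ⁅A, x⁆⁆ * ⁅A, x⁆ + x * ⁅A, ⁅A, ⁅A, x⁆⁆⁆) := by
  have hWx := congrArg (⁅W, ·⁆) hx
  simp only [LieAlgebra.lie_smul, lie_mul_eq_add, lie_lie_of_lie_eq_smul hAW hW, hW, smul_mul_assoc,
    mul_smul_comm] at hWx
  refine smul_right_injective R hk ?_
  linear_combination (norm := module) hWx

theorem lie_lie_mul_lie (h2 : (2 : K) ≠ 0) (hk : k ≠ 0) (hAW : ⁅W, A⁆ = 0)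
    (hW : ⁅W, x⁆ = k • ⁅A, ⁅A, x⁆⁆) (hx : ⁅A, x⁆ * x = t • (x * ⁅A, x⁆)) :
    ⁅A, ⁅A, x⁆⁆ * ⁅A, x⁆ = t • (⁅A, x⁆ * ⁅A, ⁅A, x⁆⁆) := by
  have hAA := congrArg (⁅A, ·⁆) (lie_lie_mul_self hx)
  simp only [LieAlgebra.lie_smul, lie_add, lie_mul_eq_add] at hAA
  refine smul_right_injective R h2 ?_
  linear_combination (norm := module) hAA - lie_lie_lie_mul_self_add hk hAW hW hx

theorem lie_lie_lie_mul_self (h2 : (2 : K) ≠ 0) (hk : k ≠ 0) (hAW : ⁅W, A⁆ = 0)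
    (hW : ⁅W, x⁆ = k • ⁅A, ⁅A, x⁆⁆) (hx : ⁅A, x⁆ * x = t • (x * ⁅A, x⁆)) :
    ⁅A, ⁅A, ⁅A, x⁆⁆⁆ * x =
      t • (x * ⁅A, ⁅A, ⁅A, x⁆⁆⁆) + (t ^ 2 - 1) • (⁅A, x⁆ * ⁅A, ⁅A, x⁆⁆) := by
  linear_combination (norm := module)
    lie_lie_lie_mul_self_add hk hAW hW hx + t • lie_lie_mul_lie h2 hk hAW hW hx

end Ladder

/-- The left side of the quantized Serre relation between `x` and `y`, with `t = q²`. -/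
def qSerre (t : K) (x y : R) : R :=
  x ^ 3 * y - (t + 1 + t⁻¹) • (x ^ 2 * y * x) + (t + 1 + t⁻¹) • (x * y * x ^ 2) - y * x ^ 3

/-- The root vector of degree `δ` (the sum of the two simple roots), up to a scalar. -/
def deltaVector (t : K) (x y : R) : R := y * x - t⁻¹ • (x * y)

/-- A root vector of degree `2δ`: the `q`-commutator of `y` with the vector `⁅deltaVector, x⁆` of
degree `δ + α₁`, corrected by a multiple of the square of `deltaVector`. -/
def twoDeltaVector (t : K) (x y : R) : R :=
  (2 * t) • (y * ⁅deltaVector t x y, x⁆) - (2 : K) • (⁅deltaVector t x y, x⁆ * y) +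
    (1 - t ^ 2) • (deltaVector t x y * deltaVector t x y)

variable {t : K} {x y : R}

theorem lie_deltaVector_mul_self (ht : t ≠ 0) (hxy : qSerre t x y = 0) :
    ⁅deltaVector t x y, x⁆ * x = t • (x * ⁅deltaVector t x y, x⁆) := by
  have hserre : ⁅deltaVector t x y, x⁆ * x - t • (x * ⁅deltaVector t x y, x⁆) = -qSerre t x y := by
    simp only [qSerre, deltaVector, Ring.lie_def, pow_succ, pow_zero, one_mul, mul_sub,
      sub_mul, smul_mul_assoc, mul_smul_comm, mul_assoc]
    match_scalars <;> field_simp <;> ring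
  rwa [hxy, neg_zero, sub_eq_zero] at hserre

theorem lie_twoDeltaVector_left (ht : t ≠ 0) (hxy : qSerre t x y = 0) :
    ⁅twoDeltaVector t x y, x⁆ = (1 + t ^ 2) • ⁅deltaVector t x y, ⁅deltaVector t x y, x⁆⁆ := by
  have hserre : ⁅twoDeltaVector t x y, x⁆ -
      (1 + t ^ 2) • ⁅deltaVector t x y, ⁅deltaVector t x y, x⁆⁆ =
        (2 * t⁻¹) • (qSerre t x y * y) - (2 * t) • (y * qSerre t x y) := by
    simp only [qSerre, twoDeltaVector, deltaVector, Ring.lie_def, pow_succ, pow_zero, one_mul,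
      mul_add, add_mul, mul_sub, sub_mul, smul_mul_assoc, mul_smul_comm, mul_assoc]
    match_scalars <;> field_simp <;> ring
  rwa [hxy, zero_mul, mul_zero, smul_zero, smul_zero, sub_zero, sub_eq_zero] at hserre

theorem lie_twoDeltaVector_deltaVector (ht : t ≠ 0) (h3 : 1 + t + t ^ 2 ≠ 0)
    (hxy : qSerre t x y = 0) (hyx : qSerre t y x = 0) :
    ⁅twoDeltaVector t x y, deltaVector t x y⁆ = 0 := by
  have hserre : (t * (1 + t + t ^ 2)) • ⁅twoDeltaVector t x y, deltaVector t x y⁆ =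
      (2 * (t * (1 + t))) • (y * qSerre t x y * y + x * qSerre t y x * x) -
        (2 : K) • (qSerre t x y * y * y + x * x * qSerre t y x) -
        (2 * t ^ 3) • (y * y * qSerre t x y + qSerre t y x * x * x) := by
    simp only [qSerre, twoDeltaVector, deltaVector, Ring.lie_def, pow_succ, pow_zero, one_mul,
      mul_add, add_mul, mul_sub, sub_mul, smul_mul_assoc, mul_smul_comm, mul_assoc, smul_add,
      smul_sub, smul_smul]
    match_scalars <;> field_simp <;> ring
  rw [hxy, hyx] at hserre
  simpa [ht, h3] using hserre

/-- The straightening relations between the four root vectors `u₀, u₁, u₂, u₃` in the subalgebra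
of the quantized enveloping algebra of Kronecker type; each rewrites a product in increasing order
of the indices in terms of products in decreasing order. -/
structure KroneckerRels (q : K) (u : Fin 4 → R) : Prop where
  mul₀₁ : u 0 * u 1 = (q ^ 2)⁻¹ • (u 1 * u 0)
  mul₁₂ : u 1 * u 2 = (q ^ 2)⁻¹ • (u 2 * u 1)
  mul₂₃ : u 2 * u 3 = (q ^ 2)⁻¹ • (u 3 * u 2)
  mul₀₂ : u 0 * u 2 = (q ^ 2)⁻¹ • (u 2 * u 0) - (1 - (q ^ 2)⁻¹) • u 1 ^ 2
  mul₁₃ : u 1 * u 3 = (q ^ 2)⁻¹ • (u 3 * u 1) - (1 - (q ^ 2)⁻¹) • u 2 ^ 2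
  mul₀₃ : u 0 * u 3 = (q ^ 2)⁻¹ • (u 3 * u 0) - (1 - (q ^ 4)⁻¹) • (u 2 * u 1)

theorem kroneckerRels_iterate_lie_deltaVector {q : K} (hq : q ≠ 0) (h2 : (2 : K) ≠ 0)
    (h3 : 1 + q ^ 2 + (q ^ 2) ^ 2 ≠ 0) (hk : 1 + (q ^ 2) ^ 2 ≠ 0)
    (hxy : qSerre (q ^ 2) x y = 0) (hyx : qSerre (q ^ 2) y x = 0) :
    KroneckerRels q fun i => (⁅deltaVector (q ^ 2) x y, ·⁆)^[i] x := by
  have ht : q ^ 2 ≠ 0 := pow_ne_zero 2 hq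
  have hAW := lie_twoDeltaVector_deltaVector ht h3 hxy hyx
  have hW₀ := lie_twoDeltaVector_left ht hxy
  have hW₁ := lie_lie_of_lie_eq_smul hAW hW₀
  have h₁₀ := lie_deltaVector_mul_self ht hxy
  have h₂₀ := lie_lie_mul_self h₁₀
  have h₂₁ := lie_lie_mul_lie h2 hk hAW hW₀ h₁₀
  have h₃₀ := lie_lie_lie_mul_self h2 hk hAW hW₀ h₁₀
  have h₃₁ := lie_lie_mul_self h₂₁
  have h₃₂ := lie_lie_mul_lie h2 hk hAW hW₁ h₂₁
  constructor <;>
    simp only [Fin.isValue, Fin.coe_ofNat_eq_mod, Nat.reduceMod, Function.iterate_succ,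
      Function.iterate_zero, Function.comp_apply, id_eq, sq (⁅_, _⁆ : R), h₁₀,
      h₂₀, h₂₁, h₃₀, h₃₁, h₃₂] <;>
    match_scalars <;> field_simp <;> ring

theorem KroneckerRels.pow_smul {q : K} {u : Fin 4 → R} (h : KroneckerRels q u) (c : K) :
    KroneckerRels q fun i => c ^ (i : ℕ) • u i := by
  constructor <;>
    simp only [Fin.isValue, Fin.coe_ofNat_eq_mod, Nat.reduceMod, smul_mul_smul_comm, smul_pow,
      h.mul₀₁, h.mul₁₂, h.mul₂₃, h.mul₀₂, h.mul₁₃, h.mul₀₃] <;>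
    module

theorem iterate_smul_lie (c : K) (A x : R) (n : ℕ) :
    (⁅c • A, ·⁆)^[n] x = c ^ n • (⁅A, ·⁆)^[n] x := by
  induction n with
  | zero => simp
  | succ n ih =>
    rw [Function.iterate_succ_apply', Function.iterate_succ_apply', ih]
    simp only [Ring.lie_def, smul_mul_smul_comm, smul_sub, pow_succ, mul_comm c]

open Polynomial in
theorem kroneckerRels_of_qSerre_eq_zero {q : K} (hq : Transcendental ℤ q)
    (hxy : qSerre (q ^ 2) x y = 0) (hyx : qSerre (q ^ 2) y x = 0) (c d : K) :
    KroneckerRels q fun i => c ^ (i : ℕ) • (⁅d • deltaVector (q ^ 2) x y, ·⁆)^[i] x := by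
  have hne (p : ℤ[X]) (hp : p.eval 0 ≠ 0) {z : K} (hz : aeval q p = z) : z ≠ 0 := by
    rintro rfl
    exact hp (by rw [transcendental_iff.1 hq p hz, eval_zero])
  have hq₀ : q ≠ 0 := ne_zero_of_transcendental hq
  have h2 : (2 : K) ≠ 0 := hne 2 (by simp) (map_ofNat _ 2)
  have h3 : 1 + q ^ 2 + (q ^ 2) ^ 2 ≠ 0 := hne (1 + X ^ 2 + (X ^ 2) ^ 2) (by simp) (by simp)
  have hk : 1 + (q ^ 2) ^ 2 ≠ 0 := hne (1 + (X ^ 2) ^ 2) (by simp) (by simp)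
  have hrels := (kroneckerRels_iterate_lie_deltaVector hq₀ h2 h3 hk hxy hyx).pow_smul (c * d)
  simpa only [iterate_smul_lie, smul_smul, mul_pow] using hrels

theorem KroneckerRels.of_comp {R' : Type*} [Ring R'] [Algebra K R'] {q : K} {u : Fin 4 → R}
    {f : R →ₐ[K] R'} (hf : Function.Injective f) (h : KroneckerRels q (f ∘ u)) :
    KroneckerRels q u := by
  constructor <;> refine hf ?_ <;> simp only [map_mul, map_sub, map_smul, map_pow]
  exacts [h.mul₀₁, h.mul₁₂, h.mul₂₃, h.mul₀₂, h.mul₁₃, h.mul₀₃]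

end SerreToKronecker

section QuantumMinors

variable {K R : Type*} [Field K] [Ring R] [Algebra K R]

/-- The quantum minor `p₀ = u₂u₀ - q²u₁²`. -/
def quantumMinor₀ (q : K) (u : Fin 4 → R) : R := u 2 * u 0 - q ^ 2 • u 1 ^ 2

/-- The quantum minor `p₁ = u₃u₁ - q²u₂²`. -/
def quantumMinor₁ (q : K) (u : Fin 4 → R) : R := u 3 * u 1 - q ^ 2 • u 2 ^ 2

/-- The ordered monomial `u₃^{a₃}u₂^{a₂}u₁^{a₁}u₀^{a₀}`. -/
def pbwMonomial (u : Fin 4 → R) (a : Idx) : R :=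
  u 3 ^ a.1 * u 2 ^ a.2.1 * u 1 ^ a.2.2.1 * u 0 ^ a.2.2.2

/-- The dual PBW element `E[a]`, the rescaling of the ordered monomial by `q^{b(a)}`. -/
def dualPBW (q : K) (u : Fin 4 → R) (a : Idx) : R := q ^ bexp a • pbwMonomial u a

/-- The exponent of the monomial obtained by reversing the order of the four variables. -/
def revIdx (a : Idx) : Idx := (a.2.2.2, a.2.2.1, a.2.1, a.1)

variable {q : K} {u : Fin 4 → R}

theorem mul_mul_of_mul_eq {x y z : R} (h : x * y = z) (w : R) : x * (y * w) = z * w := by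
  rw [← mul_assoc, h]

theorem KroneckerRels.semiconjBy_quantumMinor₀ (h : KroneckerRels q u) (hq : q ≠ 0) (i : Fin 4) :
    SemiconjBy (quantumMinor₀ q u) (q ^ (2 * i - 2 : ℤ) • u i) (u i) := by
  fin_cases i <;>
    simp only [SemiconjBy, quantumMinor₀, Fin.isValue, Fin.zero_eta, Fin.mk_one, Fin.reduceFinMk,
      Nat.cast_zero, Nat.cast_one, Nat.cast_ofNat, mul_zero, mul_one, zero_sub, sub_self,
      Int.reduceMul, Int.reduceSub, Int.reduceNeg, zpow_neg, zpow_ofNat,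
      sq, mul_sub, sub_mul, mul_smul_comm, smul_mul_assoc, mul_assoc, h.mul₀₁, h.mul₁₂, h.mul₀₂,
      h.mul₁₃, h.mul₀₃, mul_mul_of_mul_eq h.mul₀₁, mul_mul_of_mul_eq h.mul₁₂,
      mul_mul_of_mul_eq h.mul₀₂, mul_mul_of_mul_eq h.mul₁₃, mul_mul_of_mul_eq h.mul₂₃] <;>
    match_scalars <;> field_simp <;> ring

theorem KroneckerRels.pbwMonomial_mul_quantumMinor₀ (h : KroneckerRels q u) (hq : q ≠ 0)
    (a : Idx) :
    pbwMonomial u a * quantumMinor₀ q u =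
      q ^ (4 * a.1 + 2 * a.2.1 - 2 * a.2.2.2 : ℤ) • (quantumMinor₀ q u * pbwMonomial u a) := by
  have hp := h.semiconjBy_quantumMinor₀ hq
  have hmon := ((((hp 3).pow_right a.1).mul_right ((hp 2).pow_right a.2.1)).mul_right
    ((hp 1).pow_right a.2.2.1)).mul_right ((hp 0).pow_right a.2.2.2)
  rw [pbwMonomial, ← hmon.eq]
  simp only [smul_pow, smul_mul_assoc, mul_smul_comm, smul_smul, ← zpow_natCast, ← zpow_mul,
    ← zpow_add₀ hq]
  congr 2
  simp only [Fin.isValue, Fin.coe_ofNat_eq_mod, Nat.reduceMod, Nat.cast_zero, Nat.cast_one,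
    Nat.cast_ofNat]
  ring

theorem KroneckerRels.smul_pbwMonomial_mul_quantumMinor₀ (h : KroneckerRels q u) (hq : q ≠ 0)
    (a : Idx) :
    q ^ (2 * a.2.2.1 + 2 * a.2.2.2) • (pbwMonomial u a * quantumMinor₀ q u) =
      pbwMonomial u (a + (0, 1, 0, 1)) -
        q ^ (2 * a.2.2.1 + 2) • pbwMonomial u (a + (0, 0, 2, 0)) := by
  obtain ⟨a₃, a₂, a₁, a₀⟩ := a
  have hp₀ : u 0 ^ a₀ * quantumMinor₀ q u =
      (q ^ (2 * a₀))⁻¹ • (quantumMinor₀ q u * u 0 ^ a₀) := by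
    rw [← ((h.semiconjBy_quantumMinor₀ hq 0).pow_right a₀).eq, smul_pow, mul_smul_comm]
    simp [pow_mul]
  have hp₁ : u 1 ^ a₁ * quantumMinor₀ q u = quantumMinor₀ q u * u 1 ^ a₁ := by
    simpa using ((h.semiconjBy_quantumMinor₀ hq 1).pow_right a₁).eq.symm
  have hu : u 0 * u 1 ^ a₁ = (q ^ (2 * a₁))⁻¹ • (u 1 ^ a₁ * u 0) := by
    have hsc : SemiconjBy (u 0) (u 1) ((q ^ 2)⁻¹ • u 1) := by
      rw [SemiconjBy, h.mul₀₁, smul_mul_assoc]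
    rw [(hsc.pow_right a₁).eq, smul_pow, inv_pow, ← pow_mul, smul_mul_assoc]
  have hu₁ : u 1 ^ (a₁ + 2) = u 1 ^ 2 * u 1 ^ a₁ := by rw [add_comm, pow_add]
  simp only [pbwMonomial, Prod.mk_add_mk, add_zero, mul_assoc, hp₀, mul_mul_of_mul_eq hp₁,
    mul_smul_comm]
  simp only [quantumMinor₀, sub_mul, mul_sub, smul_mul_assoc, mul_smul_comm, mul_assoc,
    mul_mul_of_mul_eq hu, hu₁, pow_succ _ a₂, pow_succ' _ a₀]
  match_scalars <;> field_simp <;> ring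

theorem bexp_add_middle (a : Idx) : bexp (a + (0, 0, 2, 0)) = bexp a + (2 * a.2.2.1 + 1) := by
  obtain ⟨a₃, a₂, a₁, a₀⟩ := a
  simp only [bexp, Prod.mk_add_mk, add_zero, Nat.choose_succ_succ' _ 1, Nat.choose_one_right]
  ring

theorem bexp_add_outer (a : Idx) :
    bexp (a + (0, 1, 0, 1)) = bexp a + (a.2.1 + a.2.2.2) := by
  obtain ⟨a₃, a₂, a₁, a₀⟩ := a
  simp only [bexp, Prod.mk_add_mk, add_zero, Nat.choose_succ_succ' _ 1, Nat.choose_one_right]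
  ring

theorem KroneckerRels.smul_dualPBW_mul_quantumMinor₀ (h : KroneckerRels q u) (hq : q ≠ 0)
    (a : Idx) :
    q ^ (a.2.1 + 2 * a.2.2.1 + 3 * a.2.2.2) • (dualPBW q u a * quantumMinor₀ q u) =
      dualPBW q u (a + (0, 1, 0, 1)) -
        q ^ (a.2.1 + a.2.2.2 + 1) • dualPBW q u (a + (0, 0, 2, 0)) := by
  have hmon := congrArg (q ^ (bexp a + (a.2.1 + a.2.2.2)) • ·)
    (h.smul_pbwMonomial_mul_quantumMinor₀ hq a)
  simp only [dualPBW, bexp_add_middle, bexp_add_outer, smul_mul_assoc]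
  linear_combination (norm := module) hmon

theorem KroneckerRels.dualPBW_mul_quantumMinor₀ (h : KroneckerRels q u) (hq : q ≠ 0) (a : Idx) :
    dualPBW q u a * quantumMinor₀ q u =
      q ^ (4 * a.1 + 2 * a.2.1 - 2 * a.2.2.2 : ℤ) • (quantumMinor₀ q u * dualPBW q u a) := by
  rw [dualPBW, smul_mul_assoc, h.pbwMonomial_mul_quantumMinor₀ hq, smul_comm, mul_smul_comm]

theorem KroneckerRels.op (h : KroneckerRels q u) :
    KroneckerRels q fun i => MulOpposite.op (u i.rev) := by
  constructor <;>
    simp [Fin.rev, ← MulOpposite.op_mul, ← MulOpposite.op_pow, ← MulOpposite.op_smul,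
      ← MulOpposite.op_sub, h.mul₀₁, h.mul₁₂, h.mul₂₃, h.mul₀₂, h.mul₁₃, h.mul₀₃]

theorem quantumMinor₀_op_rev (q : K) (u : Fin 4 → R) :
    quantumMinor₀ q (fun i => MulOpposite.op (u i.rev)) = MulOpposite.op (quantumMinor₁ q u) :=
  rfl

theorem dualPBW_op_rev (q : K) (u : Fin 4 → R) (a : Idx) :
    dualPBW q (fun i => MulOpposite.op (u i.rev)) a = MulOpposite.op (dualPBW q u (revIdx a)) := by
  have hbexp : bexp a = bexp (revIdx a) := by
    simp only [bexp, revIdx]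
    ring
  simp [dualPBW, hbexp, pbwMonomial, revIdx, Fin.rev, mul_assoc]

theorem KroneckerRels.smul_quantumMinor₁_mul_dualPBW (h : KroneckerRels q u) (hq : q ≠ 0)
    (a : Idx) :
    q ^ (3 * a.1 + 2 * a.2.1 + a.2.2.1) • (quantumMinor₁ q u * dualPBW q u a) =
      dualPBW q u (a + (1, 0, 1, 0)) -
        q ^ (a.1 + a.2.2.1 + 1) • dualPBW q u (a + (0, 2, 0, 0)) := by
  have hop := h.op.smul_dualPBW_mul_quantumMinor₀ hq (revIdx a)
  rw [dualPBW_op_rev, dualPBW_op_rev, dualPBW_op_rev, quantumMinor₀_op_rev] at hop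
  have hexp : 3 * a.1 + 2 * a.2.1 + a.2.2.1 = a.2.2.1 + 2 * a.2.1 + 3 * a.1 := by ring
  rw [hexp, add_comm a.1]
  exact MulOpposite.op_injective hop

theorem KroneckerRels.dualPBW_mul_quantumMinor₁ (h : KroneckerRels q u) (hq : q ≠ 0) (a : Idx) :
    dualPBW q u a * quantumMinor₁ q u =
      q ^ (2 * a.1 - 2 * a.2.2.1 - 4 * a.2.2.2 : ℤ) • (quantumMinor₁ q u * dualPBW q u a) := by
  have hop := h.op.dualPBW_mul_quantumMinor₀ hq (revIdx a)
  rw [dualPBW_op_rev, quantumMinor₀_op_rev] at hop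
  have hunop : quantumMinor₁ q u * dualPBW q u a =
      q ^ (4 * a.2.2.2 + 2 * a.2.2.1 - 2 * a.1 : ℤ) • (dualPBW q u a * quantumMinor₁ q u) :=
    MulOpposite.op_injective hop
  have hexp : (2 * a.1 - 2 * a.2.2.1 - 4 * a.2.2.2 : ℤ) +
      (4 * a.2.2.2 + 2 * a.2.2.1 - 2 * a.1) = 0 := by ring
  rw [hunop, smul_smul, ← zpow_add₀ hq, hexp, zpow_zero, one_smul]

end QuantumMinors

section IndexOrder

variable {a b c d : Idx}

theorem tri_refl (a : Idx) : tri a a := ⟨0, 0, by simp, by simp, by simp, by simp⟩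

theorem tri_trans : tri a b → tri b c → tri a c := by
  rintro ⟨s, r, hb₃, hb₂, hb₁, hb₀⟩ ⟨s', r', hc₃, hc₂, hc₁, hc₀⟩
  exact ⟨s + s', r + r', by lia, by lia, by lia, by lia⟩

theorem tri_add : tri a b → tri c d → tri (a + c) (b + d) := by
  rintro ⟨s, r, hb₃, hb₂, hb₁, hb₀⟩ ⟨s', r', hd₃, hd₂, hd₁, hd₀⟩
  refine ⟨s + s', r + r', ?_, ?_, ?_, ?_⟩ <;> simp only [Prod.fst_add, Prod.snd_add] <;> lia

theorem Nnum_eq_of_tri : tri a b → Nnum b = Nnum a := by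
  rintro ⟨s, r, h₃, h₂, h₁, h₀⟩
  simp only [Nnum, h₃, h₂, h₁, h₀]
  ring

/-- The total exponent of the two extreme variables `u₃` and `u₀`. -/
def outerDegree (a : Idx) : ℕ := a.1 + a.2.2.2

theorem outerDegree_add (a b : Idx) : outerDegree (a + b) = outerDegree a + outerDegree b := by
  simp only [outerDegree, Prod.fst_add, Prod.snd_add]
  ring

theorem outerDegree_le_of_tri : tri a b → outerDegree b ≤ outerDegree a := by
  rintro ⟨s, r, h₃, -, -, h₀⟩
  simp only [outerDegree]
  lia

theorem mem_Sset_iff : b ∈ Sset a ↔ tri a b ∧ outerDegree b < outerDegree a := by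
  refine and_congr_right ?_
  rintro ⟨s, r, h₃, h₂, h₁, h₀⟩
  rw [Ne, Prod.ext_iff, Prod.ext_iff, Prod.ext_iff]
  simp only [outerDegree]
  lia

theorem Sset_subset_Sset_of_mem (hb : b ∈ Sset a) : Sset b ⊆ Sset a := fun c hc => by
  rw [mem_Sset_iff] at hb hc ⊢
  exact ⟨tri_trans hb.1 hc.1, hc.2.trans hb.2⟩

theorem add_mem_Sset_of_mem_of_tri (hb : b ∈ Sset a) (hd : tri c d) : b + d ∈ Sset (a + c) := by
  rw [mem_Sset_iff] at hb ⊢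
  rw [outerDegree_add, outerDegree_add]
  exact ⟨tri_add hb.1 hd, add_lt_add_of_lt_of_le hb.2 (outerDegree_le_of_tri hd)⟩

theorem add_mem_Sset_of_tri_of_mem (hb : tri a b) (hd : d ∈ Sset c) : b + d ∈ Sset (a + c) := by
  rw [add_comm a, add_comm b]
  exact add_mem_Sset_of_mem_of_tri hd hb

theorem mem_Sset_zero_one_zero_one : ((0, 0, 2, 0) : Idx) ∈ Sset (0, 1, 0, 1) :=
  ⟨⟨0, 1, by simp⟩, by simp⟩

theorem mem_Sset_one_zero_one_zero : ((0, 2, 0, 0) : Idx) ∈ Sset (1, 0, 1, 0) :=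
  ⟨⟨1, 0, by simp⟩, by simp⟩

variable {K M : Type*} [Field K] [AddCommGroup M] [Module K M] {q : K} {E : Idx → M}

theorem map_sub_mem_qLattice_of_shift {f : M →ₗ[K] M} (hd : d ∈ Sset c) {k : Idx → ℕ}
    (hf : ∀ b, tri a b → f (E b) = E (b + c) - q ^ (k b + 1) • E (b + d)) {z : M}
    (hz : z - E a ∈ qLattice q E (Sset a)) :
    f z - E (a + c) ∈ qLattice q E (Sset (a + c)) := by
  set L := qLattice q E (Sset (a + c))
  have hpow {z : M} (hz : z ∈ L) (n : ℕ) : q ^ n • z ∈ L :=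
    L.smul_mem ⟨q ^ n, pow_mem (Algebra.self_mem_adjoin_singleton ℤ q) n⟩ hz
  have htail {b : Idx} (hb : tri a b) : q ^ (k b + 1) • E (b + d) ∈ L := by
    rw [pow_succ, mul_smul]
    exact hpow (smul_mem_qLattice E (add_mem_Sset_of_tri_of_mem hb hd)) _
  have hlattice : qLattice q E (Sset a) ≤ L.comap (f.restrictScalars (Algebra.adjoin ℤ {q})) := by
    refine Submodule.span_le.2 ?_
    rintro _ ⟨b, hb, rfl⟩
    have hbc := smul_mem_qLattice (q := q) E (add_mem_Sset_of_mem_of_tri hb (tri_refl c))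
    simpa [hf b hb.1, smul_sub] using L.sub_mem hbc (q_smul_mem_of_mem L (htail hb.1))
  have hsplit : f z - E (a + c) = f (z - E a) - q ^ (k a + 1) • E (a + d) := by
    rw [map_sub, hf a (tri_refl a)]
    abel
  rw [hsplit]
  exact L.sub_mem (hlattice hz) (htail (tri_refl a))

end IndexOrder

section DualCanonicalBasis

variable {K R : Type*} [Field K] [Ring R] [Algebra K R]

/-- The defining properties of the anti-automorphism `σ`, semilinear over an endomorphism `bar` of
the scalars that inverts `q`. -/
structure IsBarAntiautomorphism (q : K) (u : Fin 4 → R) {bar : K →+* K} (σ : R →ₛₗ[bar] R) :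
    Prop where
  bar_q : bar q = q⁻¹
  map_mul (x y : R) : σ (x * y) = σ y * σ x
  map_u (i : Fin 4) : σ (u i) = q ^ (2 * (i : ℕ)) • u i

/-- The two properties characterizing the dual canonical basis: `B` is unitriangular over `qℤ[q]`
with respect to the dual PBW basis, and its elements are eigenvectors of `σ`. -/
structure IsDualCanonicalBasis (q : K) (u : Fin 4 → R) {bar : K →+* K} (σ : R →ₛₗ[bar] R)
    (B : Idx → R) : Prop where
  sub_mem (a : Idx) : B a - dualPBW q u a ∈ qLattice q (dualPBW q u) (Sset a)
  map_eq (a : Idx) : σ (B a) = q ^ (-Nnum a) • B a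

variable {q : K} {u : Fin 4 → R} {bar : K →+* K} {σ : R →ₛₗ[bar] R} {B : Idx → R} {a : Idx}

theorem linearIndependent_dualPBW (hq : q ≠ 0) (hli : LinearIndependent K (pbwMonomial u)) :
    LinearIndependent K (dualPBW q u) :=
  hli.units_smul fun a => Units.mk0 (q ^ bexp a) (pow_ne_zero _ hq)

namespace IsBarAntiautomorphism

theorem map_quantumMinor₀ (hσ : IsBarAntiautomorphism q u σ) (hu : KroneckerRels q u)
    (hq : q ≠ 0) : σ (quantumMinor₀ q u) = q ^ (2 : ℤ) • quantumMinor₀ q u := by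
  simp only [quantumMinor₀, map_sub, map_smulₛₗ, map_pow, hσ.bar_q, sq (u 1), hσ.map_mul, hσ.map_u,
    smul_mul_smul_comm, hu.mul₀₂, Fin.isValue, Fin.coe_ofNat_eq_mod, Nat.reduceMod, zpow_ofNat]
  match_scalars <;> field_simp <;> ring

theorem map_quantumMinor₁ (hσ : IsBarAntiautomorphism q u σ) (hu : KroneckerRels q u)
    (hq : q ≠ 0) : σ (quantumMinor₁ q u) = q ^ (6 : ℤ) • quantumMinor₁ q u := by
  simp only [quantumMinor₁, map_sub, map_smulₛₗ, map_pow, hσ.bar_q, sq (u 2), hσ.map_mul, hσ.map_u,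
    smul_mul_smul_comm, hu.mul₁₃, Fin.isValue, Fin.coe_ofNat_eq_mod, Nat.reduceMod, zpow_ofNat]
  match_scalars <;> field_simp <;> ring

theorem map_zpow_smul_mul (hσ : IsBarAntiautomorphism q u σ) (hq : q ≠ 0) {x p : R} {n m s : ℤ}
    (hx : σ x = q ^ n • x) (hp : σ p = q ^ s • p) (hxp : x * p = q ^ m • (p * x)) (k : ℤ) :
    σ (q ^ k • (x * p)) = q ^ (n + s - m - 2 * k) • q ^ k • (x * p) := by
  rw [map_smulₛₗ, map_zpow₀, hσ.bar_q, hσ.map_mul, hx, hp, hxp, smul_mul_smul_comm]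
  simp only [smul_smul, inv_zpow', ← zpow_add₀ hq]
  congr 2
  ring

end IsBarAntiautomorphism

namespace IsDualCanonicalBasis

theorem mem_span (hB : IsDualCanonicalBasis q u σ B) (a : Idx) :
    B a ∈ Submodule.span K (dualPBW q u '' {b | tri a b}) := by
  have htri : Sset a ⊆ {b | tri a b} := fun b hb => hb.1
  have hsub := Submodule.span_mono (Set.image_mono htri)
    (mem_span_of_mem_qLattice (hB.sub_mem a))
  have hE : dualPBW q u a ∈ Submodule.span K (dualPBW q u '' {b | tri a b}) :=
    Submodule.subset_span ⟨a, tri_refl a, rfl⟩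
  simpa only [sub_add_cancel] using Submodule.add_mem _ hsub hE

theorem mul_eq_smul_mul (hB : IsDualCanonicalBasis q u σ B) {p : R} {c : K}
    (hp : ∀ b, tri a b → dualPBW q u b * p = c • (p * dualPBW q u b)) :
    B a * p = c • (p * B a) := by
  refine LinearMap.eqOn_span' (f := LinearMap.mulRight K p) (g := c • LinearMap.mulLeft K p) ?_
    (hB.mem_span a)
  rintro _ ⟨b, hb, rfl⟩
  exact hp b hb

theorem eq_of_sub_mem_of_map_eq (hB : IsDualCanonicalBasis q u σ B)
    (hσ : IsBarAntiautomorphism q u σ) (hq : Transcendental ℤ q)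
    (hli : LinearIndependent K (pbwMonomial u)) {z : R}
    (hz : z - dualPBW q u a ∈ qLattice q (dualPBW q u) (Sset a))
    (hσz : σ z = q ^ (-Nnum a) • z) : B a = z := by
  have hq₀ : q ≠ 0 := ne_zero_of_transcendental hq
  have hN (a) : ∀ b ∈ Sset a, q ^ (-Nnum b) = q ^ (-Nnum a) := fun b hb => by
    rw [Nnum_eq_of_tri hb.1]
  have hsub (a) : ∀ b ∈ Sset a, Sset b ⊆ Sset a := fun _ hb => Sset_subset_Sset_of_mem hb
  have hdeg (a) : ∀ b ∈ Sset a, outerDegree b < outerDegree a := fun _ hb => (mem_Sset_iff.1 hb).2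
  have hE := linearIndependent_dualPBW hq₀ hli
  have hc : q ^ (-Nnum a) ≠ 0 := zpow_ne_zero _ hq₀
  exact eq_of_sub_mem_qLattice_of_bar_eq (c := fun a => q ^ (-Nnum a)) hq hσ.bar_q hsub hdeg hN hE
    hB.sub_mem hB.map_eq hc hz hσz

theorem mul_quantumMinor₀ (hB : IsDualCanonicalBasis q u σ B) (hu : KroneckerRels q u) (hq : q ≠ 0)
    (a : Idx) :
    B a * quantumMinor₀ q u =
      q ^ (4 * a.1 + 2 * a.2.1 - 2 * a.2.2.2 : ℤ) • (quantumMinor₀ q u * B a) := by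
  refine hB.mul_eq_smul_mul fun b hb => ?_
  obtain ⟨s, r, h₃, h₂, -, h₀⟩ := hb
  rw [hu.dualPBW_mul_quantumMinor₀ hq]
  congr 2
  lia

theorem mul_quantumMinor₁ (hB : IsDualCanonicalBasis q u σ B) (hu : KroneckerRels q u) (hq : q ≠ 0)
    (a : Idx) :
    B a * quantumMinor₁ q u =
      q ^ (2 * a.1 - 2 * a.2.2.1 - 4 * a.2.2.2 : ℤ) • (quantumMinor₁ q u * B a) := by
  refine hB.mul_eq_smul_mul fun b hb => ?_
  obtain ⟨s, r, h₃, -, h₁, h₀⟩ := hb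
  rw [hu.dualPBW_mul_quantumMinor₁ hq]
  congr 2
  lia

theorem smul_mul_quantumMinor₀_sub_mem (hB : IsDualCanonicalBasis q u σ B)
    (hu : KroneckerRels q u) (hq : q ≠ 0) (a : Idx) :
    q ^ (a.2.1 + 2 * a.2.2.1 + 3 * a.2.2.2) • (B a * quantumMinor₀ q u) -
      dualPBW q u (a + (0, 1, 0, 1)) ∈ qLattice q (dualPBW q u) (Sset (a + (0, 1, 0, 1))) := by
  set k := a.2.1 + 2 * a.2.2.1 + 3 * a.2.2.2
  refine map_sub_mem_qLattice_of_shift (f := q ^ k • LinearMap.mulRight K (quantumMinor₀ q u))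
    (k := fun b => b.2.1 + b.2.2.2) mem_Sset_zero_one_zero_one (fun b hb => ?_) (hB.sub_mem a)
  rw [LinearMap.smul_apply, LinearMap.mulRight_apply, ← hu.smul_dualPBW_mul_quantumMinor₀ hq]
  obtain ⟨s, r, -, h₂, h₁, h₀⟩ := hb
  congr 2
  lia

theorem smul_quantumMinor₁_mul_sub_mem (hB : IsDualCanonicalBasis q u σ B)
    (hu : KroneckerRels q u) (hq : q ≠ 0) (a : Idx) :
    q ^ (3 * a.1 + 2 * a.2.1 + a.2.2.1) • (quantumMinor₁ q u * B a) -
      dualPBW q u (a + (1, 0, 1, 0)) ∈ qLattice q (dualPBW q u) (Sset (a + (1, 0, 1, 0))) := by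
  set k := 3 * a.1 + 2 * a.2.1 + a.2.2.1
  refine map_sub_mem_qLattice_of_shift (f := q ^ k • LinearMap.mulLeft K (quantumMinor₁ q u))
    (k := fun b => b.1 + b.2.2.1) mem_Sset_one_zero_one_zero (fun b hb => ?_) (hB.sub_mem a)
  rw [LinearMap.smul_apply, LinearMap.mulLeft_apply, ← hu.smul_quantumMinor₁_mul_dualPBW hq]
  obtain ⟨s, r, h₃, h₂, h₁, -⟩ := hb
  congr 2
  lia

theorem smul_mul_quantumMinor₀_comm (hB : IsDualCanonicalBasis q u σ B) (hu : KroneckerRels q u)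
    (hq : q ≠ 0) (a : Idx) :
    q ^ (a.2.1 + 2 * a.2.2.1 + 3 * a.2.2.2) • (B a * quantumMinor₀ q u) =
      q ^ (4 * a.1 + 3 * a.2.1 + 2 * a.2.2.1 + a.2.2.2) • (quantumMinor₀ q u * B a) := by
  rw [hB.mul_quantumMinor₀ hu hq, smul_smul, ← zpow_natCast, ← zpow_natCast, ← zpow_add₀ hq]
  congr 2
  push_cast
  ring

theorem smul_quantumMinor₁_mul_comm (hB : IsDualCanonicalBasis q u σ B) (hu : KroneckerRels q u)
    (hq : q ≠ 0) (a : Idx) :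
    q ^ (3 * a.1 + 2 * a.2.1 + a.2.2.1) • (quantumMinor₁ q u * B a) =
      q ^ (a.1 + 2 * a.2.1 + 3 * a.2.2.1 + 4 * a.2.2.2) • (B a * quantumMinor₁ q u) := by
  rw [hB.mul_quantumMinor₁ hu hq, smul_smul, ← zpow_natCast, ← zpow_natCast, ← zpow_add₀ hq]
  congr 2
  push_cast
  ring

theorem map_smul_mul_quantumMinor₀ (hB : IsDualCanonicalBasis q u σ B)
    (hσ : IsBarAntiautomorphism q u σ) (hu : KroneckerRels q u) (hq : q ≠ 0) (a : Idx) :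
    σ (q ^ (a.2.1 + 2 * a.2.2.1 + 3 * a.2.2.2) • (B a * quantumMinor₀ q u)) =
      q ^ (-Nnum (a + (0, 1, 0, 1))) •
        q ^ (a.2.1 + 2 * a.2.2.1 + 3 * a.2.2.2) • (B a * quantumMinor₀ q u) := by
  rw [← zpow_natCast q (_ + _), hσ.map_zpow_smul_mul hq (hB.map_eq a) (hσ.map_quantumMinor₀ hu hq)
    (hB.mul_quantumMinor₀ hu hq a)]
  congr 2
  simp only [Nnum, Prod.fst_add, Prod.snd_add]
  push_cast
  ring

theorem map_smul_quantumMinor₁_mul (hB : IsDualCanonicalBasis q u σ B)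
    (hσ : IsBarAntiautomorphism q u σ) (hu : KroneckerRels q u) (hq : q ≠ 0) (a : Idx) :
    σ (q ^ (3 * a.1 + 2 * a.2.1 + a.2.2.1) • (quantumMinor₁ q u * B a)) =
      q ^ (-Nnum (a + (1, 0, 1, 0))) •
        q ^ (3 * a.1 + 2 * a.2.1 + a.2.2.1) • (quantumMinor₁ q u * B a) := by
  rw [hB.smul_quantumMinor₁_mul_comm hu hq, ← zpow_natCast q (_ + _), hσ.map_zpow_smul_mul hq
    (hB.map_eq a) (hσ.map_quantumMinor₁ hu hq) (hB.mul_quantumMinor₁ hu hq a)]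
  congr 2
  simp only [Nnum, Prod.fst_add, Prod.snd_add]
  push_cast
  ring

end IsDualCanonicalBasis

theorem stmt9_general (hq : Transcendental ℤ q) (hu : KroneckerRels q u)
    (hPBW : LinearIndependent K (pbwMonomial u)) (hσ : IsBarAntiautomorphism q u σ)
    (hB : IsDualCanonicalBasis q u σ B) (a : Idx) :
    B (a + (0, 1, 0, 1))
        = q ^ (a.2.1 + 2 * a.2.2.1 + 3 * a.2.2.2) • (B a * quantumMinor₀ q u) ∧
    B (a + (0, 1, 0, 1))
        = q ^ (4 * a.1 + 3 * a.2.1 + 2 * a.2.2.1 + a.2.2.2) • (quantumMinor₀ q u * B a) ∧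
    B (a + (1, 0, 1, 0))
        = q ^ (3 * a.1 + 2 * a.2.1 + a.2.2.1) • (quantumMinor₁ q u * B a) ∧
    B (a + (1, 0, 1, 0))
        = q ^ (a.1 + 2 * a.2.1 + 3 * a.2.2.1 + 4 * a.2.2.2) • (B a * quantumMinor₁ q u) := by
  have hq₀ : q ≠ 0 := ne_zero_of_transcendental hq
  have hp₀ := hB.eq_of_sub_mem_of_map_eq hσ hq hPBW (hB.smul_mul_quantumMinor₀_sub_mem hu hq₀ a)
    (hB.map_smul_mul_quantumMinor₀ hσ hu hq₀ a)
  have hp₁ := hB.eq_of_sub_mem_of_map_eq hσ hq hPBW (hB.smul_quantumMinor₁_mul_sub_mem hu hq₀ a)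
    (hB.map_smul_quantumMinor₁_mul hσ hu hq₀ a)
  exact ⟨hp₀, hp₀.trans (hB.smul_mul_quantumMinor₀_comm hu hq₀ a), hp₁,
    hp₁.trans (hB.smul_quantumMinor₁_mul_comm hu hq₀ a)⟩

end DualCanonicalBasis

section Specialization

open Polynomial in
theorem transcendental_int_map_X {k K : Type*} [Field k] [CharZero k] [Field K] {f : k[X] →+* K}
    (hf : Function.Injective f) : Transcendental ℤ (f X) := by
  have hX : Transcendental ℤ (X : k[X]) :=
    (transcendental_X k).restrictScalars (FaithfulSMul.algebraMap_injective ℤ k)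
  exact mt (isAlgebraic_algHom_iff f.toIntAlgHom hf).1 hX

-- The instance is spelled out because `RatFunc` carries another `ℤ`-algebra structure.
theorem transcendental_qq : @Transcendental ℤ F _ _ (Ring.toIntAlgebra F) qq := by
  rw [qq, ← RatFunc.algebraMap_X]
  exact transcendental_int_map_X (RatFunc.algebraMap_injective ℚ)

theorem qSerre_E1_E2 : qSerre (qq ^ 2) E1 E2 = 0 := by
  have h := RingQuot.mkAlgHom_rel F SerreRel.rel1
  simpa [qSerre, box3, E1, E2] using h

theorem qSerre_E2_E1 : qSerre (qq ^ 2) E2 E1 = 0 := by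
  have h := RingQuot.mkAlgHom_rel F SerreRel.rel2
  simpa [qSerre, box3, E1, E2] using h

theorem Aelt_eq_smul_deltaVector : Aelt = (qq + qq⁻¹)⁻¹ • deltaVector (qq ^ 2) E1 E2 := by
  rw [Aelt, deltaVector, inv_pow]

theorem kroneckerRels_U : KroneckerRels qq ![u0, u1, u2, u3] := by
  convert kroneckerRels_of_qSerre_eq_zero transcendental_qq qSerre_E1_E2 qSerre_E2_E1
    ((1 - qq⁻¹ ^ 2)⁻¹ ^ 2) (qq + qq⁻¹)⁻¹ using 1
  rw [← Aelt_eq_smul_deltaVector]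
  funext i
  simp only [← pow_mul]
  fin_cases i
  · exact (one_smul F E1).symm.trans (by simp)
  all_goals rfl

/-- The root vectors `u₀, u₁, u₂, u₃` as a family in `Sgen`. -/
def rootVector : Fin 4 → Sgen := ![us0, us1, us2, us3]

theorem kroneckerRels_rootVector : KroneckerRels qq rootVector := by
  refine .of_comp (f := Sgen.val) Subtype.val_injective ?_
  convert kroneckerRels_U
  funext i
  fin_cases i <;> rfl

variable {bar : F →+* F} {σ : Sgen → Sgen} {B : Idx → Sgen}

/-- `σ` as a semilinear map. -/
def SigmaHyp.toSemilinearMap (hσ : SigmaHyp bar σ) : Sgen →ₛₗ[bar] Sgen where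
  toFun := σ
  map_add' := hσ.2.2.1
  map_smul' := hσ.2.2.2.2.1

theorem SigmaHyp.isBarAntiautomorphism (hσ : SigmaHyp bar σ) :
    IsBarAntiautomorphism qq rootVector hσ.toSemilinearMap where
  bar_q := hσ.1
  map_mul := hσ.2.2.2.1
  map_u i := by
    obtain ⟨-, -, -, -, -, h₀, h₁, h₂, h₃⟩ := hσ
    fin_cases i
    exacts [h₀.trans (by simp [rootVector]), h₁, h₂, h₃]

theorem DCB.isDualCanonicalBasis (hB : DCB bar σ B) (hσ : SigmaHyp bar σ) :
    IsDualCanonicalBasis qq rootVector hσ.toSemilinearMap B where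
  sub_mem a := by
    obtain ⟨φ, hφ, hsub⟩ := (hB a).1
    exact hsub ▸ smul_eval₂_sum_mem_qLattice qq Ee hφ
  map_eq a := (hB a).2

end Specialization

/-- For every `a = (a₃,a₂,a₁,a₀) ∈ ℕ⁴` the dual canonical basis elements satisfy
`B[a₃, a₂+1, a₁, a₀+1] = q^{a₂+2a₁+3a₀} B[a] p₀ = q^{4a₃+3a₂+2a₁+a₀} p₀ B[a]` and
`B[a₃+1, a₂, a₁+1, a₀] = q^{3a₃+2a₂+a₁} p₁ B[a] = q^{a₃+2a₂+3a₁+4a₀} B[a] p₁`. -/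
theorem stmt9 (bar : F →+* F) (σ : Sgen → Sgen) (B : Idx → Sgen)
    (hPBW : LinearIndependent F mon) (hσ : SigmaHyp bar σ) (hB : DCB bar σ B) (a : Idx) :
    B (a.1, a.2.1 + 1, a.2.2.1, a.2.2.2 + 1)
        = qq ^ (a.2.1 + 2 * a.2.2.1 + 3 * a.2.2.2) • (B a * ps0) ∧
    B (a.1, a.2.1 + 1, a.2.2.1, a.2.2.2 + 1)
        = qq ^ (4 * a.1 + 3 * a.2.1 + 2 * a.2.2.1 + a.2.2.2) • (ps0 * B a) ∧
    B (a.1 + 1, a.2.1, a.2.2.1 + 1, a.2.2.2)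
        = qq ^ (3 * a.1 + 2 * a.2.1 + a.2.2.1) • (ps1 * B a) ∧
    B (a.1 + 1, a.2.1, a.2.2.1 + 1, a.2.2.2)
        = qq ^ (a.1 + 2 * a.2.1 + 3 * a.2.2.1 + 4 * a.2.2.2) • (B a * ps1) :=
  stmt9_general transcendental_qq kroneckerRels_rootVector hPBW hσ.isBarAntiautomorphism
    (hB.isDualCanonicalBasis hσ) a
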